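/- Let (α, 𝔄) be a standard Borel space. For each n ∈ ℕ, let π_n : α^n → (finite multisets over α) be the map sending a tuple (a_1, …, a_n) to the multiset {{a_1, …, a_n}}. Then a set A of finite multisets over α belongs to the counting σ-algebra 𝔠 if and only if for every n ∈ ℕ the preimage π_n⁻¹(A) is measurable with respect to the n-fold product σ-algebra 𝔄^{⊗n} on α^n. -/

import Mathlib

open MeasureTheory

/- `bagCount F D` is `|D|_F`: the number of elements of the finite bag (multiset) `D`
that lie in the set `F`, counted with multiplicity. -/
open Classical in
noncomputable def bagCount {α : Type*} (F : Set α) (D : Multiset α) : ℕ :=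
  Multiset.countP (fun a => a ∈ F) D

/-- The counting event `#(F, n)`: all finite bags `D` with `|D|_F = n`. -/
def countingEvent {α : Type*} (F : Set α) (n : ℕ) : Set (Multiset α) :=
  {D : Multiset α | bagCount F D = n}

/-- The counting σ-algebra `𝔠` on finite bags (multisets) over a measurable space `α`:
the σ-algebra generated by the counting events `#(F, n)` for measurable `F ⊆ α` and `n ∈ ℕ`. -/
def countingSigmaAlgebra (α : Type*) [MeasurableSpace α] : MeasurableSpace (Multiset α) :=
  MeasurableSpace.generateFrom
    {A : Set (Multiset α) | ∃ (F : Set α) (n : ℕ), MeasurableSet F ∧ A = countingEvent F n}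

/-!
The idea is to replace a bag `{{a_1, …, a_n}}` by the measure `∑ σ, δ_(a_σ(1), …, a_σ(n))` on `αⁿ`,
the sum being over all permutations `σ`, which depends on the bag only. Its mass on a rectangle
`F_1 × ⋯ × F_n` is determined by the image of the bag under `a ↦ (a ∈ F_1, …, a ∈ F_n)`, a bag over
a finite set, so it is a measurable function of the bag; by the π-λ theorem the same holds for the
mass on any measurable `E ⊆ αⁿ`. If `E` is the preimage of `A`, then `E` is symmetric, and among
the bags of cardinality `n` this mass is nonzero exactly on those in `A`.
-/

section BagCount

variable {α β : Type*}

lemma bagCount_map (g : α → β) (F : Set β) (D : Multiset α) :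
    bagCount F (D.map g) = bagCount (g ⁻¹' F) D := by
  classical
  rw [bagCount, Multiset.countP_map, bagCount, Multiset.countP_eq_card_filter]
  rfl

lemma bagCount_univ (D : Multiset α) : bagCount Set.univ D = D.card := by
  simp [bagCount]

lemma eq_iff_forall_bagCount_singleton {D D' : Multiset α} :
    D = D' ↔ ∀ a, bagCount {a} D = bagCount {a} D' := by
  classical
  simp [Multiset.ext, bagCount, Multiset.count, eq_comm]

end BagCount

section BagOfFn

variable {α β : Type*} {n : ℕ}

/-- The map `π_n` sending a tuple `(a_1, …, a_n)` to the bag `{{a_1, …, a_n}}`. -/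
def bagOfFn (t : Fin n → α) : Multiset α :=
  (List.ofFn t : List α)

lemma bagOfFn_comp (g : α → β) (t : Fin n → α) : bagOfFn (g ∘ t) = (bagOfFn t).map g := by
  simp [bagOfFn, List.map_ofFn]

lemma bagOfFn_comp_perm (t : Fin n → α) (σ : Equiv.Perm (Fin n)) :
    bagOfFn (t ∘ σ) = bagOfFn t :=
  Multiset.coe_eq_coe.2 (σ.ofFn_comp_perm t)

lemma exists_bagOfFn_eq {D : Multiset α} (hD : D.card = n) : ∃ t : Fin n → α, bagOfFn t = D := by
  subst hD
  induction D using Quotient.inductionOn with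
  | h l => exact ⟨l.get, congrArg _ (List.ofFn_get l)⟩

lemma bagCount_bagOfFn (F : Set α) (t : Fin n → α) :
    bagCount F (bagOfFn t) = Nat.card {i // t i ∈ F} := by
  classical
  rw [bagOfFn, ← Fin.univ_val_map, bagCount_map, Nat.card_eq_fintype_card, Fintype.card_subtype]
  simp only [bagCount, Multiset.countP_eq_card_filter, Set.mem_preimage]
  rfl

lemma bagOfFn_eq_iff_exists_perm {t t' : Fin n → α} :
    bagOfFn t = bagOfFn t' ↔ ∃ σ : Equiv.Perm (Fin n), t = t' ∘ σ := by
  constructor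
  · intro h
    have fiberEquiv (a : α) : Nonempty ({i // t i = a} ≃ {i // t' i = a}) := by
      refine Finite.card_eq.1 ?_
      simpa only [bagCount_bagOfFn, Set.mem_singleton_iff] using congrArg (bagCount {a}) h
    let e (a : α) := (fiberEquiv a).some
    exact ⟨Equiv.ofFiberEquiv e, funext fun i => (Equiv.ofFiberEquiv_map e i).symm⟩
  · rintro ⟨σ, rfl⟩
    exact bagOfFn_comp_perm t' σ

end BagOfFn

section Measurability

/-- The counting σ-algebra as the σ-algebra on bags; local, as `Multiset` carries no canonical
one. -/
local instance multisetMeasurableSpace {α : Type*} [MeasurableSpace α] :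
    MeasurableSpace (Multiset α) :=
  countingSigmaAlgebra α

section CountingSigmaAlgebra

variable {α β : Type*} [MeasurableSpace α] [MeasurableSpace β]

lemma measurable_bagCount {F : Set α} (hF : MeasurableSet F) : Measurable (bagCount F) :=
  measurable_to_countable' fun n => MeasurableSpace.measurableSet_generateFrom ⟨F, n, hF, rfl⟩

lemma measurable_multiset_iff {f : β → Multiset α} :
    Measurable f ↔ ∀ F : Set α, MeasurableSet F → Measurable fun b => bagCount F (f b) := by
  refine ⟨fun hf F hF => (measurable_bagCount hF).comp hf, fun hf => measurable_generateFrom ?_⟩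
  rintro _ ⟨F, n, hF, rfl⟩
  exact hf F hF (measurableSet_singleton n)

lemma measurable_multiset_card : Measurable (Multiset.card : Multiset α → ℕ) := by
  rw [← funext bagCount_univ]
  exact measurable_bagCount MeasurableSet.univ

lemma measurable_multiset_map {g : α → β} (hg : Measurable g) : Measurable (Multiset.map g) :=
  measurable_multiset_iff.2 fun F hF => by
    simpa only [bagCount_map] using measurable_bagCount (hg hF)

lemma measurable_bagOfFn (n : ℕ) : Measurable (bagOfFn : (Fin n → α) → Multiset α) := by
  refine measurable_multiset_iff.2 fun F hF => ?_
  have membership_measurable : Measurable fun (t : Fin n → α) i => t i ∈ F :=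
    measurable_pi_lambda _ fun i => hF.mem.comp (measurable_pi_apply i)
  simp only [bagCount_bagOfFn]
  exact (measurable_of_countable fun p : Fin n → Prop => Nat.card {i // p i}).comp
    membership_measurable

instance multiset_measurableSingletonClass [Countable α] [MeasurableSingletonClass α] :
    MeasurableSingletonClass (Multiset α) where
  measurableSet_singleton D := by
    have singleton_eq : {D} = ⋂ a, {D' : Multiset α | bagCount {a} D' = bagCount {a} D} := by
      ext D'
      simp only [Set.mem_singleton_iff, Set.mem_iInter, Set.mem_ofPred_eq,
        eq_iff_forall_bagCount_singleton]
    rw [singleton_eq]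
    exact MeasurableSet.iInter fun a =>
      measurable_bagCount (measurableSet_singleton a) (measurableSet_singleton _)

end CountingSigmaAlgebra

section ReorderingMeasure

variable {α β γ Ω : Type*} {n : ℕ}
  [MeasurableSpace α] [MeasurableSpace β] [MeasurableSpace γ] [MeasurableSpace Ω]

lemma measurable_of_perm_invariant [Countable β] [MeasurableSingletonClass β]
    {X : Ω → Fin n → β} (hX : Measurable fun ω => bagOfFn (X ω)) {h : (Fin n → β) → γ}
    (h_perm : ∀ (t : Fin n → β) (σ : Equiv.Perm (Fin n)), h (t ∘ σ) = h t) :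
    Measurable fun ω => h (X ω) := by
  intro S _
  have preimage_eq : (fun ω => h (X ω)) ⁻¹' S =
      (fun ω => bagOfFn (X ω)) ⁻¹' (bagOfFn '' (h ⁻¹' S)) := by
    ext ω
    refine ⟨fun hω => ⟨X ω, hω, rfl⟩, ?_⟩
    rintro ⟨t, ht, ht_eq⟩
    obtain ⟨σ, rfl⟩ := bagOfFn_eq_iff_exists_perm.1 ht_eq
    rwa [Set.mem_preimage, h_perm] at ht
  rw [preimage_eq]
  exact hX (Set.to_countable _).measurableSet

/-- The sum of the Dirac masses at all reorderings of the tuple `t`: the (unnormalised) law of a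
uniformly random enumeration of the bag `bagOfFn t`. Reorderings are counted with multiplicity, so
that the total mass is `n!` also when `t` has repeated entries. -/
noncomputable def reorderingMeasure (t : Fin n → α) : Measure (Fin n → α) :=
  ∑ σ : Equiv.Perm (Fin n), Measure.dirac (t ∘ σ)

instance isFiniteMeasure_reorderingMeasure (t : Fin n → α) :
    IsFiniteMeasure (reorderingMeasure t) := by
  unfold reorderingMeasure
  infer_instance

lemma reorderingMeasure_apply (t : Fin n → α) {E : Set (Fin n → α)} (hE : MeasurableSet E) :
    reorderingMeasure t E = Nat.card {σ : Equiv.Perm (Fin n) // t ∘ σ ∈ E} := by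
  classical
  simp [reorderingMeasure, Measure.dirac_apply' _ hE, Set.indicator_apply, Fintype.card_subtype]

lemma reorderingMeasure_comp_perm (t : Fin n → α) (τ : Equiv.Perm (Fin n)) :
    reorderingMeasure (t ∘ τ) = reorderingMeasure t :=
  Equiv.sum_comp (Equiv.mulLeft τ) fun σ : Equiv.Perm (Fin n) => Measure.dirac (t ∘ σ)

lemma reorderingMeasure_preimage_bagOfFn_ne_zero_iff {A : Set (Multiset α)}
    (hA : MeasurableSet (bagOfFn (n := n) ⁻¹' A)) (t : Fin n → α) :
    reorderingMeasure t (bagOfFn ⁻¹' A) ≠ 0 ↔ bagOfFn t ∈ A := by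
  have preimage_symmetric (σ : Equiv.Perm (Fin n)) : t ∘ σ ∈ bagOfFn ⁻¹' A ↔ bagOfFn t ∈ A := by
    rw [Set.mem_preimage, bagOfFn_comp_perm]
  rw [reorderingMeasure_apply t hA, Nat.cast_ne_zero, Nat.card_ne_zero,
    and_iff_left Subtype.finite]
  simp only [nonempty_subtype, preimage_symmetric, exists_const]

lemma measurable_reorderingMeasure_pi {X : Ω → Fin n → α}
    (hX : Measurable fun ω => bagOfFn (X ω)) {F : Fin n → Set α} (hF : ∀ i, MeasurableSet (F i)) :
    Measurable fun ω => reorderingMeasure (X ω) (Set.univ.pi F) := by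
  let memberships (a : α) (i : Fin n) : Prop := a ∈ F i
  have memberships_measurable : Measurable memberships :=
    measurable_pi_lambda _ fun i => (hF i).mem
  let diagonal : Set (Fin n → Fin n → Prop) := {p | ∀ i, p i i}
  have reorderingMeasure_pi (t : Fin n → α) :
      reorderingMeasure t (Set.univ.pi F) = reorderingMeasure (memberships ∘ t) diagonal := by
    rw [reorderingMeasure_apply t (MeasurableSet.univ_pi hF),
      reorderingMeasure_apply (memberships ∘ t) diagonal.to_countable.measurableSet]
    simp only [Set.mem_univ_pi]
    rfl
  have bag_measurable : Measurable fun ω => bagOfFn (memberships ∘ X ω) := by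
    simp only [bagOfFn_comp]
    exact (measurable_multiset_map memberships_measurable).comp hX
  simp only [reorderingMeasure_pi]
  exact measurable_of_perm_invariant (h := fun p => reorderingMeasure p diagonal) bag_measurable
    fun p σ => by rw [reorderingMeasure_comp_perm]

lemma measurable_reorderingMeasure {X : Ω → Fin n → α}
    (hX : Measurable fun ω => bagOfFn (X ω)) :
    Measurable fun ω => reorderingMeasure (X ω) := by
  refine Measurable.measure_of_isPiSystem generateFrom_pi.symm isPiSystem_pi ?_ ?_
  · rintro _ ⟨F, hF, rfl⟩
    exact measurable_reorderingMeasure_pi hX fun i => hF i (Set.mem_univ i)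
  · simpa only [Set.pi_univ] using measurable_reorderingMeasure_pi hX fun _ => MeasurableSet.univ

lemma measurableSet_inter_card_eq {A : Set (Multiset α)}
    (hA : MeasurableSet (bagOfFn (n := n) ⁻¹' A)) :
    MeasurableSet (A ∩ {D | D.card = n}) := by
  have card_measurable : MeasurableSet {D : Multiset α | D.card = n} :=
    measurable_multiset_card (measurableSet_singleton n)
  choose enum bagOfFn_enum using fun D : {D : Multiset α | D.card = n} => exists_bagOfFn_eq D.2
  have bag_measurable : Measurable fun D => bagOfFn (enum D) := by
    simpa only [bagOfFn_enum] using measurable_subtype_coe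
  have mass_measurable : Measurable fun D => reorderingMeasure (enum D) (bagOfFn ⁻¹' A) :=
    (Measure.measurable_coe hA).comp (measurable_reorderingMeasure bag_measurable)
  have preimage_measurable : MeasurableSet
      ((↑) ⁻¹' A : Set {D : Multiset α | D.card = n}) := by
    convert mass_measurable (measurableSet_singleton 0).compl using 1
    ext D
    simp only [Set.mem_preimage, Set.mem_compl_singleton_iff,
      reorderingMeasure_preimage_bagOfFn_ne_zero_iff hA, bagOfFn_enum]
  rw [Set.inter_comm, ← Subtype.image_preimage_coe]
  exact card_measurable.subtype_image preimage_measurable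

end ReorderingMeasure

end Measurability

theorem mem_countingSigmaAlgebra_iff_measurable_preimage_ofFn_general
    {α : Type*} [MeasurableSpace α] (A : Set (Multiset α)) :
    MeasurableSet[countingSigmaAlgebra α] A ↔
      ∀ n : ℕ,
        MeasurableSet ((fun t : Fin n → α => ((List.ofFn t : List α) : Multiset α)) ⁻¹' A) := by
  refine ⟨fun hA n => measurable_bagOfFn n hA, fun hA => ?_⟩
  have hA_iUnion : A = ⋃ n, A ∩ {D | D.card = n} := by
    ext D
    simp
  rw [hA_iUnion]
  exact MeasurableSet.iUnion fun n => measurableSet_inter_card_eq (hA n)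

/-- For a standard Borel space `α`, a set `A` of finite bags over `α`
belongs to the counting σ-algebra iff for every `n` the preimage of `A` under the map
`π_n : αⁿ → Multiset α`, `(a_1, …, a_n) ↦ {{a_1, …, a_n}}`, is measurable with respect
to the `n`-fold product σ-algebra on `αⁿ`. -/
theorem mem_countingSigmaAlgebra_iff_measurable_preimage_ofFn
    {α : Type*} [MeasurableSpace α] [StandardBorelSpace α] (A : Set (Multiset α)) :
    MeasurableSet[countingSigmaAlgebra α] A ↔
      ∀ n : ℕ,
        MeasurableSet ((fun t : Fin n → α => ((List.ofFn t : List α) : Multiset α)) ⁻¹' A) := by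
  exact mem_countingSigmaAlgebra_iff_measurable_preimage_ofFn_general A
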